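/- Let n ≥ 2, let ι be a finite index type, and for each i ∈ ι let G_i be a finite group and S_i ⊆ G_i a subset closed under inverses. Let G = ZMod n × ∏_{i ∈ ι} G_i and let S = {(x, g) : x is a unit of ZMod n and g_i ∈ S_i for all i ∈ ι}, and let X be the Cayley graph of G with connection set S (u adjacent to v iff u·v⁻¹ ∈ S, the first coordinate written additively). Suppose for each i ∈ ι we are given a group homomorphism ρ_i : G_i → ℂ* and a constant ℓ_i ∈ ℂ with ρ_i(s) = ℓ_i for all s ∈ S_i, and let m ∈ ℤ. Then the complex vector v indexed by G with entries v_{(x,g)} = exp(2πi·x̃·m/n)·∏_{i ∈ ι} ρ_i(g_i) (where x̃ ∈ {0, …, n−1} is the canonical representative of x) satisfies A·v = ((∏_{i ∈ ι} ℓ_i·|S_i|)·C(m, n))·v, where A is the adjacency matrix of X over ℂ; in particular v is an eigenvector of A with eigenvalue (∏_{i ∈ ι} ℓ_i·|S_i|)·C(m, n). -/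

import Mathlib

/-!
The vector `v` is, up to identifying `ZMod n × ∏ G i` with a group, a one-dimensional character
`χ`: the exponential factor is the standard additive character of `ZMod n` at `x * m`
(`exp_eq_stdAddChar`), the other factors are the `ρ i`. The neighbours of `u` are the translates
of `u` by the inverses of the connection set, so multiplicativity gives
`(A v)(u) = (∑ χ(q⁻¹)) * v u`, the sum running over `q` in the connection set. That sum factors:
over the units of `ZMod n` it is the Ramanujan sum (`ramanujanSum_eq_sum_isUnit`), and each
`S i` contributes `card (S i)` equal terms `ℓ i`.
-/

open Finset

/-- The Ramanujan sum `C(m, n) = ∑_{1 ≤ k ≤ n, gcd(k,n) = 1} exp(2πi k m / n)`,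
with integer parameter `m`. -/
noncomputable def ramanujanSum (m : ℤ) (n : ℕ) : ℂ :=
  ∑ k ∈ (Finset.Icc 1 n).filter (fun k => Nat.gcd k n = 1),
    Complex.exp (2 * Real.pi * Complex.I * k * m / n)

/-- The exponentials in the eigenvector and in the Ramanujan sum are values of the standard
additive character of `ZMod n`. -/
lemma exp_eq_stdAddChar (n : ℕ) [NeZero n] (k : ℕ) (m : ℤ) :
    Complex.exp (2 * Real.pi * Complex.I * (k : ℂ) * (m : ℂ) / n) =
      ZMod.stdAddChar ((k : ZMod n) * (m : ZMod n)) := by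
  have h := ZMod.stdAddChar_coe (N := n) ((k : ℤ) * m)
  push_cast at h
  rw [h]
  congr 1
  ring

/-- The Ramanujan sum as a character sum over the units of `ZMod n`. The sign `-a` is the one
produced by the adjacency relation; it is harmless since `a ↦ -a` permutes the units. -/
lemma ramanujanSum_eq_sum_isUnit (m : ℤ) (n : ℕ) [NeZero n] :
    ramanujanSum m n =
      ∑ a ∈ univ.filter (fun a : ZMod n => IsUnit a),
        ZMod.stdAddChar (-a * (m : ZMod n)) := by
  unfold ramanujanSum
  have hn : 0 < n := Nat.pos_of_neZero n
  -- The representative of `-a` in `{1, …, n}` is `n - a.val`, with `a.val` in `{0, …, n - 1}`.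
  refine Finset.sum_bij' (fun k _ => -(k : ZMod n)) (fun a _ => n - a.val) ?_ ?_ ?_ ?_ ?_
  · intro k hk
    simp only [Finset.mem_filter, Finset.mem_univ, true_and, IsUnit.neg_iff] at hk ⊢
    exact (ZMod.isUnit_iff_coprime k n).mpr hk.2
  · intro a ha
    simp only [Finset.mem_filter, Finset.mem_univ, true_and, Finset.mem_Icc] at ha ⊢
    have hlt := ZMod.val_lt a
    refine ⟨⟨by omega, by omega⟩, ?_⟩
    rw [← Nat.coprime_iff_gcd_eq_one, ← ZMod.isUnit_iff_coprime, Nat.cast_sub hlt.le]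
    simpa using ha
  · intro k hk
    simp only [Finset.mem_filter, Finset.mem_Icc] at hk
    have h : (-(k : ZMod n)) = ((n - k : ℕ) : ZMod n) := by
      rw [Nat.cast_sub hk.1.2]; simp
    rw [h, ZMod.val_natCast, Nat.mod_eq_of_lt (by omega)]
    omega
  · intro a _
    rw [Nat.cast_sub (ZMod.val_lt a).le]
    simp
  · intro k _
    rw [exp_eq_stdAddChar, neg_neg]

theorem cayley_prod_eigenvector (n : ℕ) (hn : 2 ≤ n) [NeZero n]
    {ι : Type*} [Fintype ι] [DecidableEq ι]
    (G : ι → Type*) [∀ i, Group (G i)] [∀ i, Fintype (G i)] [∀ i, DecidableEq (G i)]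
    (S : ∀ i, Finset (G i)) (hSinv : ∀ i, ∀ s ∈ S i, s⁻¹ ∈ S i)
    (X : SimpleGraph (ZMod n × ∀ i, G i)) [DecidableRel X.Adj]
    (hX : ∀ u v : ZMod n × ∀ i, G i,
      X.Adj u v ↔ (IsUnit (u.1 - v.1) ∧ ∀ i, u.2 i * (v.2 i)⁻¹ ∈ S i))
    (ρ : ∀ i, G i →* ℂˣ) (ℓ : ι → ℂ)
    (hρ : ∀ i, ∀ s ∈ S i, ((ρ i s : ℂˣ) : ℂ) = ℓ i)
    (m : ℤ) :
    let v : (ZMod n × ∀ i, G i) → ℂ := fun p =>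
      Complex.exp (2 * Real.pi * Complex.I * (p.1.val : ℂ) * (m : ℂ) / n) *
        ∏ i, ((ρ i (p.2 i) : ℂˣ) : ℂ)
    (X.adjMatrix ℂ).mulVec v =
      ((∏ i, ℓ i * ((S i).card : ℂ)) * ramanujanSum m n) • v := by
  intro v
  have hv : ∀ p, v p = ZMod.stdAddChar (p.1 * (m : ZMod n)) *
      ∏ i, ((ρ i (p.2 i) : ℂˣ) : ℂ) := fun p => by
    have h := exp_eq_stdAddChar n p.1.val m
    rw [ZMod.natCast_zmod_val] at h
    rw [← h]
  ext u
  rw [SimpleGraph.adjMatrix_mulVec_apply, Pi.smul_apply, smul_eq_mul]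
  -- The neighbours of `u` are the translates `(u.1 - a, s⁻¹ * u.2)` with `(a, s)` in the
  -- connection set.
  have hsum : ∑ p ∈ X.neighborFinset u, v p =
      ∑ q ∈ (univ.filter fun a : ZMod n => IsUnit a) ×ˢ Fintype.piFinset S,
        v (u.1 - q.1, q.2⁻¹ * u.2) := by
    refine Finset.sum_bij' (fun p _ => (u.1 - p.1, u.2 * p.2⁻¹))
      (fun q _ => (u.1 - q.1, q.2⁻¹ * u.2)) ?_ ?_ ?_ ?_ ?_
    · intro p hp
      simpa [hX] using hp
    · intro q hq
      simpa [hX] using hq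
    · intro p _
      simp
    · intro q _
      simp
    · intro p _
      simp
  -- Closure of `S i` under inverses gives `ρ i s⁻¹ = ℓ i` as well.
  have hterm : ∀ q ∈ (univ.filter fun a : ZMod n => IsUnit a) ×ˢ Fintype.piFinset S,
      v (u.1 - q.1, q.2⁻¹ * u.2) =
        ZMod.stdAddChar (-q.1 * (m : ZMod n)) * ((∏ i, ℓ i) * v u) := by
    rintro ⟨a, s⟩ hq
    have hs : ∀ i, s i ∈ S i := by
      simpa using (Finset.mem_product.mp hq).2
    have hprod : ∏ i, ((ρ i ((s⁻¹ * u.2) i) : ℂˣ) : ℂ) =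
        (∏ i, ℓ i) * ∏ i, ((ρ i (u.2 i) : ℂˣ) : ℂ) := by
      rw [← Finset.prod_mul_distrib]
      refine Finset.prod_congr rfl fun i _ => ?_
      rw [Pi.mul_apply, Pi.inv_apply, map_mul, Units.val_mul, hρ i _ (hSinv i _ (hs i))]
    rw [hv, hv]
    dsimp only
    rw [hprod, show (u.1 - a) * (m : ZMod n) = -a * m + u.1 * m by ring,
      AddChar.map_add_eq_mul]
    ring
  rw [hsum, Finset.sum_congr rfl hterm, Finset.sum_product, ramanujanSum_eq_sum_isUnit]
  simp only [Finset.sum_const, Fintype.card_piFinset, nsmul_eq_mul]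
  rw [← Finset.mul_sum, ← Finset.sum_mul, Finset.prod_mul_distrib]
  push_cast
  ring
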